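/- arXiv:2405.16882 — 2 statements merged into one kernel-verified Lean document; each statement's English description precedes it below -/
import Mathlib

section
/- Let I ⊂ R and J ⊂ T be nonzero proper graded ideals, identified with their extensions to S = R ⊗_K T. Then there exists k_0 ≥ 1 such that for all k ≥ k_0, v((IJ)^k) = min{ v(I^k) + α(J)·k , v(J^k) + α(I)·k }. -/
open MvPolynomial

noncomputable section

/-- The set of associated primes `Ass(L)` of the quotient by an ideal `L`. -/
def assOf {A : Type} [CommRing A] (L : Ideal A) : Set (Ideal A) :=
  associatedPrimes A (A ⧸ L)

/-- `𝔄` is the stable value `Ass^∞(L)` of `Ass(L^k)` for all large `k`. -/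
def IsStableAssValue {A : Type} [CommRing A] (L : Ideal A) (𝔄 : Set (Ideal A)) : Prop :=
  ∃ N : ℕ, ∀ k : ℕ, N ≤ k → assOf (L ^ k) = 𝔄

/-- `Ass^*(L) = ⋃_{k ≥ 1} Ass(L^k)`. -/
def assStar {A : Type} [CommRing A] (L : Ideal A) : Set (Ideal A) :=
  {p | ∃ k : ℕ, 1 ≤ k ∧ p ∈ assOf (L ^ k)}

/-- The local v-number `v_p(L)`: the least degree of a homogeneous `f` with `(L : f) = p`. -/
def vnum {σ K : Type} [Field K] (L p : Ideal (MvPolynomial σ K)) : ℕ :=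
  sInf {d : ℕ | ∃ f : MvPolynomial σ K, f.IsHomogeneous d ∧ L.colon (Ideal.span {f}) = p}

/-- The v-number `v(L) = min_{p ∈ Ass(L)} v_p(L)`. -/
def vnumber {σ K : Type} [Field K] (L : Ideal (MvPolynomial σ K)) : ℕ :=
  sInf {d : ℕ | ∃ p ∈ assOf L, ∃ f : MvPolynomial σ K,
    f.IsHomogeneous d ∧ L.colon (Ideal.span {f}) = p}

/-- The initial degree `α(L)`: the least `d` such that `L` contains a nonzero
homogeneous element of degree `d`. -/
def alphaDeg {σ K : Type} [Field K] (L : Ideal (MvPolynomial σ K)) : ℕ :=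
  sInf {d : ℕ | ∃ f ∈ L, f ≠ 0 ∧ MvPolynomial.IsHomogeneous f d}

/-- A graded (homogeneous) ideal: one containing all homogeneous components
of each of its elements. -/
def IsGradedIdeal {σ K : Type} [Field K] (I : Ideal (MvPolynomial σ K)) : Prop :=
  ∀ f ∈ I, ∀ d : ℕ, homogeneousComponent d f ∈ I

/-- A monomial ideal: an ideal generated by monomials. -/
def IsMonomialIdeal {σ K : Type} [Field K] (I : Ideal (MvPolynomial σ K)) : Prop :=
  ∃ G : Set (σ →₀ ℕ), I = Ideal.span ((fun a => (monomial a (1 : K))) '' G)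

/-!
Let `A ⊂ K[σ]` and `B ⊂ K[τ]` be graded ideals, nonzero and proper, with extensions `AS` and `BS` to
`S = K[σ ⊔ τ]`. As a base change of `K[τ] / B` from the field `K`, the algebra `S / BS` is flat over
`K[σ]`. Hence `AS ⊓ BS = AS * BS`, and nonzero elements of `K[σ]` are nonzerodivisors modulo `BS`.

* If `(A : f)` is prime and `0 ≠ g ∈ B`, then `(AB : fg) = (A : f)S`, which is again prime. Hence
  `v(AB) ≤ v(A) + α(B)`.
* If `(AB : q) = (AS : q) ⊓ (BS : q)` is prime, it equals one of the two colons, say `(AS : q)`. It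
  contains `A ≠ 0` and lies in `(BS : q)`, so `q ∈ BS`. Contracting `(AS : q)` to `K[σ]` gives the
  finite intersection of the `(A : r)`, where `r` runs over the coefficients of `q` as a polynomial
  in the variables `τ`, so some `(A : r)` is prime. A monomial of `r` then picks a coefficient of
  `q` in `B` whose degree is at least `α(B)`, and the two degrees add up to `deg q`. Hence
  `v(A) + α(B) ≤ deg q`.

So `v(AB) = min (v(A) + α(B)) (v(B) + α(A))`, and applying this to `A = I ^ k`, `B = J ^ k`, with
`α(L ^ k) = α(L) * k`, gives the formula for every `k ≥ 1`.
-/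

section Pushout

open Algebra.TensorProduct

variable (K : Type*) {R T S : Type*} [Field K] [CommRing R] [CommRing T] [CommRing S]
  [Algebra K R] [Algebra K T] [Algebra K S] [Algebra R S] [Algebra T S]
  [IsScalarTower K R S] [IsScalarTower K T S]

lemma flat_quotient_map_of_isPushout [Algebra.IsPushout K R T S] (B : Ideal T) :
    Module.Flat R (S ⧸ B.map (algebraMap T S)) := by
  let e : TensorProduct K R T ≃ₐ[R] S := Algebra.IsPushout.equiv K R T S
  have he : B.map (algebraMap T S) = (B.map (includeRight (R := K) (A := R))).map e := by
    have hcomp : algebraMap T S = (e : TensorProduct K R T →+* S).comp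
        (includeRight (R := K) (A := R) : T →ₐ[K] TensorProduct K R T) := by
      ext t
      simp [e, Algebra.IsPushout.equiv_tmul]
    rw [hcomp, ← Ideal.map_map]
    rfl
  exact .of_linearEquiv ((tensorQuotientEquiv (R := K) R T R B).trans
    (Ideal.quotientEquivAlg _ _ e he)).toLinearEquiv.symm

lemma map_inf_map_eq_mul_of_isPushout [Algebra.IsPushout K R T S] (A : Ideal R) (B : Ideal T) :
    A.map (algebraMap R S) ⊓ B.map (algebraMap T S) =
      A.map (algebraMap R S) * B.map (algebraMap T S) := by
  have := flat_quotient_map_of_isPushout K (R := R) (S := S) B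
  have h := LinearMap.ker_inf_smul_top_eq_smul_of_flat A
    (Ideal.Quotient.mkₐ R (B.map (algebraMap T S))).toLinearMap Ideal.Quotient.mk_surjective
  have hker : (Ideal.Quotient.mkₐ R (B.map (algebraMap T S))).toLinearMap.ker =
      (B.map (algebraMap T S)).restrictScalars R := by
    ext s
    simp [Ideal.Quotient.eq_zero_iff_mem]
  rw [hker, Ideal.smul_top_eq_map, ← Ideal.smul_restrictScalars] at h
  rw [inf_comm]
  exact Submodule.restrictScalars_injective R S S h

lemma mem_map_of_algebraMap_mul_mem [Algebra.IsPushout K R T S] [IsDomain R] {B : Ideal T}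
    {r : R} (hr : r ≠ 0) {s : S}
    (h : algebraMap R S r * s ∈ B.map (algebraMap T S)) : s ∈ B.map (algebraMap T S) := by
  have := flat_quotient_map_of_isPushout K (R := R) (S := S) B
  have hreg : IsSMulRegular (S ⧸ B.map (algebraMap T S)) r :=
    Module.Flat.isSMulRegular_of_nonZeroDivisors (mem_nonZeroDivisors_of_ne_zero hr)
  rw [← Ideal.Quotient.eq_zero_iff_mem] at h ⊢
  refine hreg.right_eq_zero_of_smul ?_
  rwa [← Algebra.smul_def] at h

end Pushout

section Partition

variable {K σ τ ρ : Type*} [Field K] {i : σ → ρ} {j : τ → ρ}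

lemma bijective_sumElim_swap (h : Function.Bijective (Sum.elim i j)) :
    Function.Bijective (Sum.elim j i) := by
  rw [← Sum.elim_swap]
  exact h.comp (Equiv.sumComm τ σ).bijective

/-- Polynomials in the variables `ρ = σ ⊔ τ`, viewed as polynomials in the variables `σ` whose
coefficients are polynomials in the variables `τ`. The partition of `ρ` is encoded by two maps into
`ρ` that are jointly bijective, which makes it possible to exchange the roles of `σ` and `τ`. -/
def splitEquiv (K : Type*) [Field K] (h : Function.Bijective (Sum.elim i j)) :
    MvPolynomial ρ K ≃ₐ[K] MvPolynomial σ (MvPolynomial τ K) :=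
  (renameEquiv K (Equiv.ofBijective _ h).symm).trans (sumAlgEquiv K σ τ)

variable (h : Function.Bijective (Sum.elim i j))

lemma splitEquiv_rename_sumElim (f : MvPolynomial (σ ⊕ τ) K) :
    splitEquiv K h (rename (Sum.elim i j) f) = sumAlgEquiv K σ τ f :=
  congrArg (sumAlgEquiv K σ τ) ((renameEquiv K (Equiv.ofBijective _ h)).symm_apply_apply f)

lemma splitEquiv_rename_right (g : MvPolynomial τ K) : splitEquiv K h (rename j g) = C g := by
  have hg : rename j g = rename (Sum.elim i j) (rename Sum.inr g) := by
    rw [rename_rename, Sum.elim_comp_inr]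
  rw [hg, splitEquiv_rename_sumElim]
  exact DFunLike.congr_fun (sumAlgEquiv_comp_rename_inr K σ τ) g

lemma splitEquiv_rename_left (f : MvPolynomial σ K) :
    splitEquiv K h (rename i f) = map (algebraMap K (MvPolynomial τ K)) f := by
  have hf : rename i f = rename (Sum.elim i j) (rename Sum.inl f) := by
    rw [rename_rename, Sum.elim_comp_inl]
  rw [hf, splitEquiv_rename_sumElim]
  exact DFunLike.congr_fun (sumAlgEquiv_comp_rename_inl K σ τ) f

lemma coeff_coeff_splitEquiv (f : MvPolynomial ρ K) (u : σ →₀ ℕ) (w : τ →₀ ℕ) :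
    coeff w (coeff u (splitEquiv K h f)) = coeff (u.mapDomain i + w.mapDomain j) f := by
  obtain ⟨f, rfl⟩ := (renameEquiv K (Equiv.ofBijective _ h)).surjective f
  have hd : u.mapDomain i + w.mapDomain j = (Finsupp.sumElim u w).mapDomain (Sum.elim i j) := by
    rw [Finsupp.sumElim_eq_add, Finsupp.mapDomain_add, ← Finsupp.mapDomain_comp,
      ← Finsupp.mapDomain_comp, Sum.elim_comp_inl, Sum.elim_comp_inr]
  rw [hd]
  change coeff w (coeff u (splitEquiv K h (rename (Sum.elim i j) f))) =
    coeff _ (rename (Sum.elim i j) f)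
  rw [splitEquiv_rename_sumElim, coeff_rename_mapDomain _ h.injective]
  exact AddMonoidAlgebra.coeff_domCongr (R := K) Finsupp.sumFinsuppAddEquivProdFinsupp f (u, w)

lemma mem_map_rename_right_iff {B : Ideal (MvPolynomial τ K)} {f : MvPolynomial ρ K} :
    f ∈ B.map (rename (R := K) j) ↔ ∀ u, coeff u (splitEquiv K h f) ∈ B := by
  have hC : (C : MvPolynomial τ K →+* MvPolynomial σ (MvPolynomial τ K)) =
      (splitEquiv K h : MvPolynomial ρ K →+* _).comp (rename (R := K) j : _ →+* _) :=
    RingHom.ext fun g => (splitEquiv_rename_right h g).symm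
  rw [← mem_map_C_iff, hC, ← Ideal.map_map]
  exact (Ideal.apply_mem_of_equiv_iff (f := (splitEquiv K h).toRingEquiv)).symm

lemma isPushout_rename (h : Function.Bijective (Sum.elim i j)) :
    letI := (rename (R := K) i).toAlgebra
    letI := (rename (R := K) j).toAlgebra
    Algebra.IsPushout K (MvPolynomial σ K) (MvPolynomial τ K) (MvPolynomial ρ K) := by
  let := (rename (R := K) i).toAlgebra
  let := (rename (R := K) j).toAlgebra
  let : Algebra (MvPolynomial σ K) (MvPolynomial σ (MvPolynomial τ K)) := algebraMvPolynomial
  let e : MvPolynomial ρ K ≃ₐ[MvPolynomial τ K] MvPolynomial σ (MvPolynomial τ K) :=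
    AlgEquiv.ofRingEquiv (f := (splitEquiv K h).toRingEquiv) (splitEquiv_rename_right h)
  exact .symm (.of_equiv e.symm (RingHom.ext fun f =>
    e.symm_apply_eq.mpr (splitEquiv_rename_left h f).symm))

end Partition

section Colon

lemma isHomogeneous_colon_singleton {ι A S : Type*} [AddRightCancelMonoid ι] [DecidableEq ι]
    [CommSemiring A] [SetLike S A] [AddSubmonoidClass S A] {𝒜 : ι → S} [GradedRing 𝒜]
    {L : Ideal A} (hL : L.IsHomogeneous 𝒜) {d : ι} {f : A} (hf : f ∈ 𝒜 d) :
    (L.colon {f}).IsHomogeneous 𝒜 := by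
  intro i r hr
  rw [Submodule.mem_colon_singleton, smul_eq_mul] at hr ⊢
  rw [← DirectSum.coe_decompose_mul_add_of_right_mem 𝒜 hf]
  exact hL _ hr

lemma exists_mem_isPrime_colon_singleton {ι A S : Type*} [AddCancelCommMonoid ι] [LinearOrder ι]
    [IsOrderedCancelAddMonoid ι] [CommRing A] [IsNoetherianRing A] [SetLike S A]
    [AddSubmonoidClass S A] {𝒜 : ι → S} [GradedRing 𝒜] {L : Ideal A}
    (hL : L.IsHomogeneous 𝒜) (hne : L ≠ ⊤) : ∃ d, ∃ f ∈ 𝒜 d, (L.colon {f}).IsPrime := by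
  obtain ⟨_, ⟨d, f, hf, hfL, rfl⟩, hmax⟩ := set_has_maximal_iff_noetherian.mpr ‹_›
    {p | ∃ d, ∃ f ∈ 𝒜 d, f ∉ L ∧ L.colon {f} = p}
    ⟨_, 0, 1, SetLike.GradedOne.one_mem, (Ideal.ne_top_iff_one L).mp hne, rfl⟩
  refine ⟨d, f, hf, Ideal.IsHomogeneous.isPrime_of_homogeneous_mem_or_mem
    (isHomogeneous_colon_singleton hL hf) ?_ ?_⟩
  · rwa [Ne, Submodule.colon_eq_top_iff_subset, Set.singleton_subset_iff]
  · rintro x y - ⟨e, hy⟩ hxy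
    rw [or_iff_not_imp_right, Submodule.mem_colon_singleton]
    intro hyf
    have hle : L.colon {f} ≤ L.colon {y • f} := fun r hr => by
      rw [Submodule.mem_colon_singleton] at hr ⊢
      rw [smul_comm]
      exact L.smul_mem y hr
    have hnlt := hmax _ ⟨e + d, y • f, SetLike.GradedMul.mul_mem hy hf, hyf, rfl⟩
    rw [hle.eq_of_not_lt hnlt, Submodule.mem_colon_singleton, smul_smul]
    rwa [Submodule.mem_colon_singleton] at hxy

end Colon

section GradedIdeal

variable {σ K : Type} [Field K] {L : Ideal (MvPolynomial σ K)} {f : MvPolynomial σ K} {d : ℕ}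

attribute [local instance] MvPolynomial.gradedAlgebra

lemma isGradedIdeal_iff : IsGradedIdeal L ↔ L.IsHomogeneous (homogeneousSubmodule σ K) :=
  ⟨fun h d f hf => decomposition.decompose'_apply f d ▸ h f hf d,
    fun h _ hf => homogeneousComponent_mem_of_mem h hf⟩

lemma IsGradedIdeal.pow (hL : IsGradedIdeal L) (k : ℕ) : IsGradedIdeal (L ^ k) := by
  rw [isGradedIdeal_iff] at hL ⊢
  induction k with
  | zero => simpa only [pow_zero, Ideal.one_eq_top] using Ideal.IsHomogeneous.top _
  | succ k ih => rw [pow_succ]; exact ih.mul hL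

lemma vnumber_eq_sInf :
    vnumber L = sInf {d : ℕ | ∃ f : MvPolynomial σ K,
      f.IsHomogeneous d ∧ (L.colon {f}).IsPrime} := by
  refine congrArg sInf (Set.ext fun d => ⟨?_, ?_⟩)
  · rintro ⟨p, hp, f, hf, rfl⟩
    exact ⟨f, hf, Ideal.colon_span (I := L) ▸ hp.isPrime⟩
  · rintro ⟨f, hf, hp⟩
    refine ⟨_, ⟨hp, Ideal.Quotient.mk L f, ?_⟩, f, hf, Ideal.colon_span⟩
    have h : (⊥ : Submodule (MvPolynomial σ K) (MvPolynomial σ K ⧸ L)).colon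
        {Ideal.Quotient.mk L f} = L.colon {f} := by
      ext r
      rw [Submodule.mem_colon_singleton, Submodule.mem_colon_singleton, Submodule.mem_bot,
        smul_eq_mul, ← Ideal.Quotient.eq_zero_iff_mem]
      rfl
    rw [h, hp.radical]

lemma vnumber_le (hf : f.IsHomogeneous d) (hp : (L.colon {f}).IsPrime) : vnumber L ≤ d := by
  rw [vnumber_eq_sInf]
  exact Nat.sInf_le ⟨f, hf, hp⟩

lemma exists_isHomogeneous_vnumber_of_isPrime_colon (hf : f.IsHomogeneous d)
    (hp : (L.colon {f}).IsPrime) :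
    ∃ g : MvPolynomial σ K, g.IsHomogeneous (vnumber L) ∧ (L.colon {g}).IsPrime := by
  rw [vnumber_eq_sInf]
  exact Nat.sInf_mem (s := {d : ℕ | ∃ f : MvPolynomial σ K,
      f.IsHomogeneous d ∧ (L.colon {f}).IsPrime}) ⟨d, f, hf, hp⟩

lemma IsGradedIdeal.exists_isHomogeneous_vnumber [Finite σ] (hL : IsGradedIdeal L) (hne : L ≠ ⊤) :
    ∃ g : MvPolynomial σ K, g.IsHomogeneous (vnumber L) ∧ (L.colon {g}).IsPrime := by
  obtain ⟨d, f, hf, hp⟩ := exists_mem_isPrime_colon_singleton (isGradedIdeal_iff.mp hL) hne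
  exact exists_isHomogeneous_vnumber_of_isPrime_colon hf hp

lemma alphaDeg_le (hf : f ∈ L) (hf0 : f ≠ 0) (hd : f.IsHomogeneous d) : alphaDeg L ≤ d :=
  Nat.sInf_le ⟨f, hf, hf0, hd⟩

lemma homogeneousComponent_degree_ne_zero {w : σ →₀ ℕ} (hw : coeff w f ≠ 0) :
    homogeneousComponent w.degree f ≠ 0 :=
  ne_zero_iff.mpr ⟨w, by rwa [coeff_homogeneousComponent, if_pos rfl]⟩

lemma IsGradedIdeal.alphaDeg_le_degree (hL : IsGradedIdeal L) (hf : f ∈ L) {w : σ →₀ ℕ}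
    (hw : coeff w f ≠ 0) : alphaDeg L ≤ w.degree :=
  alphaDeg_le (hL f hf w.degree) (homogeneousComponent_degree_ne_zero hw)
    (homogeneousComponent_isHomogeneous _ _)

lemma IsGradedIdeal.exists_mem_isHomogeneous_alphaDeg (hL : IsGradedIdeal L) (hne : L ≠ ⊥) :
    ∃ f ∈ L, f ≠ 0 ∧ f.IsHomogeneous (alphaDeg L) := by
  obtain ⟨f, hf, hf0⟩ := Submodule.exists_mem_ne_zero_of_ne_bot hne
  obtain ⟨w, hw⟩ := exists_coeff_ne_zero hf0
  exact Nat.sInf_mem (s := {d | ∃ f ∈ L, f ≠ 0 ∧ f.IsHomogeneous d})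
    ⟨w.degree, _, hL f hf w.degree, homogeneousComponent_degree_ne_zero hw,
      homogeneousComponent_isHomogeneous _ _⟩

lemma IsGradedIdeal.le_pow_idealOfVars (hL : IsGradedIdeal L) :
    L ≤ idealOfVars σ K ^ alphaDeg L := fun _ hf =>
  (mem_pow_idealOfVars_iff _ _).mpr fun _ hw => hL.alphaDeg_le_degree hf (mem_support_iff.mp hw)

lemma IsGradedIdeal.alphaDeg_pow (hL : IsGradedIdeal L) (hne : L ≠ ⊥) (k : ℕ) :
    alphaDeg (L ^ k) = alphaDeg L * k := by
  obtain ⟨f, hf, hf0, hfd⟩ := hL.exists_mem_isHomogeneous_alphaDeg hne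
  obtain ⟨g, hg, hg0, hgd⟩ := (hL.pow k).exists_mem_isHomogeneous_alphaDeg (pow_ne_zero k hne)
  refine le_antisymm (alphaDeg_le (Ideal.pow_mem_pow hf k) (pow_ne_zero k hf0) (hfd.pow k)) ?_
  have hmem := Ideal.pow_right_mono hL.le_pow_idealOfVars k hg
  rw [← pow_mul, mem_pow_idealOfVars_iff] at hmem
  obtain ⟨w, hw⟩ := exists_coeff_ne_zero hg0
  have hdeg : w.degree = alphaDeg (L ^ k) := by_contra fun h => hw (hgd.coeff_eq_zero h)
  exact hdeg ▸ hmem w (mem_support_iff.mpr hw)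

end GradedIdeal

section Rename

variable {K σ τ ρ : Type*} [Field K] {i : σ → ρ} {j : τ → ρ}
  {A : Ideal (MvPolynomial σ K)} {B : Ideal (MvPolynomial τ K)}

lemma map_rename_inf_map_rename (h : Function.Bijective (Sum.elim i j)) :
    A.map (rename (R := K) i) ⊓ B.map (rename (R := K) j) =
      A.map (rename (R := K) i) * B.map (rename (R := K) j) := by
  let := (rename (R := K) i).toAlgebra
  let := (rename (R := K) j).toAlgebra
  have := isPushout_rename (K := K) h
  exact map_inf_map_eq_mul_of_isPushout K A B

lemma mem_map_rename_of_rename_mul_mem (h : Function.Bijective (Sum.elim i j))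
    {r : MvPolynomial σ K} (hr : r ≠ 0) {f : MvPolynomial ρ K}
    (hf : rename i r * f ∈ B.map (rename (R := K) j)) : f ∈ B.map (rename (R := K) j) := by
  let := (rename (R := K) i).toAlgebra
  let := (rename (R := K) j).toAlgebra
  have := isPushout_rename (K := K) h
  exact mem_map_of_algebraMap_mul_mem K hr hf

lemma isPrime_map_rename (h : Function.Bijective (Sum.elim i j)) (hB : B.IsPrime) :
    (B.map (rename (R := K) j)).IsPrime := by
  have hC : (B.map (C : _ →+* MvPolynomial σ (MvPolynomial τ K))).IsPrime := by
    rw [← Ideal.mk_ker (I := B), ← ker_map]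
    exact RingHom.ker_isPrime _
  convert! hC.comap (splitEquiv K h)
  ext f
  rw [mem_map_rename_right_iff h, Ideal.mem_comap, mem_map_C_iff]

lemma colon_map_rename (h : Function.Bijective (Sum.elim i j)) (g : MvPolynomial τ K) :
    (B.map (rename (R := K) j)).colon {rename j g} = (B.colon {g}).map (rename (R := K) j) := by
  ext f
  simp only [Submodule.mem_colon_singleton, smul_eq_mul, mem_map_rename_right_iff h, map_mul,
    splitEquiv_rename_right, mul_comm _ (C g), coeff_C_mul, mul_comm _ g]

lemma comap_rename_colon (h : Function.Bijective (Sum.elim i j)) (f : MvPolynomial ρ K) :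
    ((B.map (rename (R := K) j)).colon {f}).comap (rename (R := K) j) =
      (splitEquiv K h f).support.inf fun u => B.colon {coeff u (splitEquiv K h f)} := by
  ext r
  simp only [Ideal.mem_comap, Submodule.mem_colon_singleton, smul_eq_mul,
    mem_map_rename_right_iff h, map_mul, splitEquiv_rename_right, coeff_C_mul,
    Submodule.mem_finsetInf, mem_support_iff]
  refine forall_congr' fun u => ⟨fun hu _ => hu, fun hu => ?_⟩
  by_cases h0 : coeff u (splitEquiv K h f) = 0
  · simp only [h0, mul_zero, zero_mem]
  · exact hu h0

lemma exists_isPrime_colon_coeff_splitEquiv (h : Function.Bijective (Sum.elim i j))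
    {f : MvPolynomial ρ K} (hf : ((B.map (rename (R := K) j)).colon {f}).IsPrime) :
    ∃ u, coeff u (splitEquiv K h f) ≠ 0 ∧ (B.colon {coeff u (splitEquiv K h f)}).IsPrime := by
  have hp := hf.comap (rename (R := K) j)
  rw [comap_rename_colon h] at hp
  obtain ⟨u, hu, hle⟩ := hp.inf_le'.mp le_rfl
  rw [le_antisymm (Finset.inf_le hu) hle] at hp
  exact ⟨u, mem_support_iff.mp hu, hp⟩

lemma colon_map_mul_map (h : Function.Bijective (Sum.elim i j)) (f : MvPolynomial σ K)
    {g : MvPolynomial τ K} (hg : g ∈ B) (hg0 : g ≠ 0) :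
    (A.map (rename (R := K) i) * B.map (rename (R := K) j)).colon {rename i f * rename j g} =
      (A.colon {f}).map (rename (R := K) i) := by
  have hB : (B.map (rename (R := K) j)).colon {rename i f * rename j g} = ⊤ :=
    (Submodule.colon_eq_top_iff_subset _).mpr (Set.singleton_subset_iff.mpr
      (Ideal.mul_mem_left _ _ (Ideal.mem_map_of_mem _ hg)))
  rw [← map_rename_inf_map_rename h, Submodule.inf_colon, hB, inf_top_eq,
    ← colon_map_rename (bijective_sumElim_swap h)]
  ext x
  rw [Submodule.mem_colon_singleton, Submodule.mem_colon_singleton, smul_eq_mul, smul_eq_mul,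
    ← mul_assoc, mul_comm]
  exact ⟨mem_map_rename_of_rename_mul_mem (bijective_sumElim_swap h) hg0,
    Ideal.mul_mem_left _ _⟩

lemma degree_add_degree_of_coeff_splitEquiv_ne_zero (h : Function.Bijective (Sum.elim i j))
    {f : MvPolynomial ρ K} {d : ℕ} (hf : f.IsHomogeneous d) {u : σ →₀ ℕ} {w : τ →₀ ℕ}
    (huw : coeff w (coeff u (splitEquiv K h f)) ≠ 0) : u.degree + w.degree = d := by
  rw [coeff_coeff_splitEquiv] at huw
  have hd : (u.mapDomain i + w.mapDomain j).degree = d :=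
    by_contra fun hne => huw (hf.coeff_eq_zero hne)
  rwa [map_add, Finsupp.degree_mapDomain, Finsupp.degree_mapDomain] at hd

lemma isHomogeneous_coeff_splitEquiv (h : Function.Bijective (Sum.elim i j))
    {f : MvPolynomial ρ K} {d : ℕ} (hf : f.IsHomogeneous d) {u : σ →₀ ℕ} {w : τ →₀ ℕ}
    (huw : coeff w (coeff u (splitEquiv K h f)) ≠ 0) :
    (coeff u (splitEquiv K h f)).IsHomogeneous w.degree := by
  intro w' hw'
  have hd := degree_add_degree_of_coeff_splitEquiv_ne_zero h hf huw
  have hd' := degree_add_degree_of_coeff_splitEquiv_ne_zero h hf hw'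
  exact (DFunLike.congr_fun Finsupp.degree_eq_weight_one w').symm.trans
    (Nat.add_left_cancel (hd'.trans hd.symm))

end Rename

section Main

variable {K σ τ ρ : Type} [Field K] {i : σ → ρ} {j : τ → ρ}
  {A : Ideal (MvPolynomial σ K)} {B : Ideal (MvPolynomial τ K)}

lemma exists_isHomogeneous_isPrime_colon_map_mul_map [Finite σ]
    (h : Function.Bijective (Sum.elim i j)) (hA : IsGradedIdeal A) (hAtop : A ≠ ⊤)
    (hB : IsGradedIdeal B) (hBbot : B ≠ ⊥) :
    ∃ f : MvPolynomial ρ K, f.IsHomogeneous (vnumber A + alphaDeg B) ∧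
      ((A.map (rename (R := K) i) * B.map (rename (R := K) j)).colon {f}).IsPrime := by
  obtain ⟨f, hf, hp⟩ := hA.exists_isHomogeneous_vnumber hAtop
  obtain ⟨g, hg, hg0, hgd⟩ := hB.exists_mem_isHomogeneous_alphaDeg hBbot
  refine ⟨rename i f * rename j g, hf.rename_isHomogeneous.mul hgd.rename_isHomogeneous, ?_⟩
  rw [colon_map_mul_map h f hg hg0]
  exact isPrime_map_rename (bijective_sumElim_swap h) hp

lemma vnumber_add_alphaDeg_le (h : Function.Bijective (Sum.elim i j)) (hB : IsGradedIdeal B)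
    {f : MvPolynomial ρ K} {d : ℕ} (hf : f.IsHomogeneous d)
    (hp : ((A.map (rename (R := K) i)).colon {f}).IsPrime)
    (hfB : f ∈ B.map (rename (R := K) j)) : vnumber A + alphaDeg B ≤ d := by
  have h' := bijective_sumElim_swap h
  obtain ⟨w, hw, hwp⟩ := exists_isPrime_colon_coeff_splitEquiv h' hp
  obtain ⟨u, hu⟩ := exists_coeff_ne_zero hw
  have hcoeff : coeff w (coeff u (splitEquiv K h f)) ≠ 0 := by
    rwa [coeff_coeff_splitEquiv, add_comm, ← coeff_coeff_splitEquiv h']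
  rw [← degree_add_degree_of_coeff_splitEquiv_ne_zero h hf hcoeff]
  exact add_le_add (vnumber_le (isHomogeneous_coeff_splitEquiv h' hf hu) hwp)
    (hB.alphaDeg_le_degree ((mem_map_rename_right_iff h).mp hfB u) hcoeff)

lemma vnumber_add_alphaDeg_le_of_colon_le (h : Function.Bijective (Sum.elim i j)) (hA : A ≠ ⊥)
    (hB : IsGradedIdeal B) {f : MvPolynomial ρ K} {d : ℕ} (hf : f.IsHomogeneous d)
    (hp : ((A.map (rename (R := K) i) * B.map (rename (R := K) j)).colon {f}).IsPrime)
    (hle : (A.map (rename (R := K) i)).colon {f} ≤ (B.map (rename (R := K) j)).colon {f}) :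
    vnumber A + alphaDeg B ≤ d := by
  rw [← map_rename_inf_map_rename h, Submodule.inf_colon, inf_eq_left.mpr hle] at hp
  obtain ⟨a, ha, ha0⟩ := Submodule.exists_mem_ne_zero_of_ne_bot hA
  have haf : rename i a * f ∈ B.map (rename (R := K) j) := Submodule.mem_colon_singleton.mp
    (hle (Ideal.le_colon (Ideal.mem_map_of_mem (rename (R := K) i) ha)))
  exact vnumber_add_alphaDeg_le h hB hf hp (mem_map_rename_of_rename_mul_mem h ha0 haf)

theorem vnumber_map_mul_map [Finite σ] [Finite τ] (h : Function.Bijective (Sum.elim i j))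
    (hAbot : A ≠ ⊥) (hAtop : A ≠ ⊤) (hA : IsGradedIdeal A)
    (hBbot : B ≠ ⊥) (hBtop : B ≠ ⊤) (hB : IsGradedIdeal B) :
    vnumber (A.map (rename (R := K) i) * B.map (rename (R := K) j)) =
      min (vnumber A + alphaDeg B) (vnumber B + alphaDeg A) := by
  have h' := bijective_sumElim_swap h
  obtain ⟨f, hf, hfp⟩ := exists_isHomogeneous_isPrime_colon_map_mul_map h hA hAtop hB hBbot
  obtain ⟨g, hg, hgp⟩ := exists_isHomogeneous_isPrime_colon_map_mul_map h' hB hBtop hA hAbot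
  rw [mul_comm] at hgp
  refine le_antisymm (le_min (vnumber_le hf hfp) (vnumber_le hg hgp)) ?_
  obtain ⟨q, hq, hqp⟩ := exists_isHomogeneous_vnumber_of_isPrime_colon hf hfp
  have hcolon := hqp
  rw [← map_rename_inf_map_rename h, Submodule.inf_colon] at hcolon
  rcases hcolon.inf_le.mp le_rfl with hle | hle
  · exact min_le_of_left_le
      (vnumber_add_alphaDeg_le_of_colon_le h hAbot hB hq hqp (hle.trans inf_le_right))
  · rw [mul_comm] at hqp
    exact min_le_of_right_le
      (vnumber_add_alphaDeg_le_of_colon_le h' hBbot hA hq hqp (hle.trans inf_le_left))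

theorem stmt2_general [Finite σ] [Finite τ] (h : Function.Bijective (Sum.elim i j))
    {I : Ideal (MvPolynomial σ K)} {J : Ideal (MvPolynomial τ K)}
    (hInz : I ≠ ⊥) (hIpr : I ≠ ⊤) (hIgr : IsGradedIdeal I)
    (hJnz : J ≠ ⊥) (hJpr : J ≠ ⊤) (hJgr : IsGradedIdeal J) {k : ℕ} (hk : k ≠ 0) :
    vnumber ((I.map (rename (R := K) i) * J.map (rename (R := K) j)) ^ k) =
      min (vnumber (I ^ k) + alphaDeg J * k) (vnumber (J ^ k) + alphaDeg I * k) := by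
  rw [mul_pow, ← Ideal.map_pow, ← Ideal.map_pow, ← hIgr.alphaDeg_pow hInz,
    ← hJgr.alphaDeg_pow hJnz]
  exact vnumber_map_mul_map h
    (pow_ne_zero k hInz) (ne_top_of_le_ne_top hIpr (Ideal.pow_le_self hk)) (hIgr.pow k)
    (pow_ne_zero k hJnz) (ne_top_of_le_ne_top hJpr (Ideal.pow_le_self hk)) (hJgr.pow k)

end Main

/-- Corollary 2.3: for nonzero proper graded ideals `I ⊂ R`, `J ⊂ T`,
identified with their extensions to `S`, there is `k₀ ≥ 1` such that for all `k ≥ k₀`,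
`v((IJ)^k) = min{ v(I^k) + α(J)·k , v(J^k) + α(I)·k }`. -/
theorem stmt2 {K : Type} [Field K] {n m : ℕ}
    (I : Ideal (MvPolynomial (Fin n) K)) (J : Ideal (MvPolynomial (Fin m) K))
    (hInz : I ≠ ⊥) (hIpr : I ≠ ⊤) (hIgr : IsGradedIdeal I)
    (hJnz : J ≠ ⊥) (hJpr : J ≠ ⊤) (hJgr : IsGradedIdeal J)
    (eI eJ : Ideal (MvPolynomial (Fin n ⊕ Fin m) K))
    (heI : eI = Ideal.map (rename Sum.inl) I)
    (heJ : eJ = Ideal.map (rename Sum.inr) J) :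
    ∃ k₀ : ℕ, 1 ≤ k₀ ∧ ∀ k : ℕ, k₀ ≤ k →
      vnumber ((eI * eJ) ^ k) =
        min (vnumber (I ^ k) + alphaDeg J * k) (vnumber (J ^ k) + alphaDeg I * k) := by
  subst heI heJ
  exact ⟨1, le_rfl, fun k hk => stmt2_general (Sum.elim_inl_inr ▸ Function.bijective_id)
    hInz hIpr hIgr hJnz hJpr hJgr (Nat.one_le_iff_ne_zero.mp hk)⟩
end
end

section
/- Let I ⊂ R and J ⊂ T be nonzero proper monomial ideals, identified with their extensions to S = R ⊗_K T. Then Ass^∞(I+J) = { p + q : p ∈ Ass^*(I), q ∈ Ass^∞(J) } ∪ { p + q : p ∈ Ass^∞(I), q ∈ Ass^*(J) }, where p runs over prime ideals of R, q runs over prime ideals of T, and p + q denotes the sum of their extensions to S. -/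
open MvPolynomial

noncomputable section

/-
Every associated prime of a monomial ideal is a colon by a monomial. If `x^a ∈ I^i` and
`y^b ∈ J^j`, then `(I + J)^(i+j+1) : x^a y^b = (I^(i+1) : x^a) + (J^(j+1) : y^b)`. A prime colon
contains a variable, and dividing a monomial by a variable lowers its adic order by at most one; so
`(I + J)^k : x^a y^b` is prime only when the adic orders `i`, `j` of `x^a`, `y^b` satisfy
`i + j + 1 = k`. Hence `Ass((I + J)^k)` consists of the sums `p + q` with `p ∈ Ass(I^(i+1))`,
`q ∈ Ass(J^(j+1))` and `i + j + 1 = k`; for `k` large, one of the two exponents is in the stable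
range.
-/

section Exponents

variable {σ R : Type*} [CommSemiring R] {L M : Ideal (MvPolynomial σ R)} {a b : σ →₀ ℕ}

/-- The exponents of the monomials lying in `L`; they determine a monomial ideal `L`, and turn
sums, products and colons of monomial ideals into operations on subsets of `σ →₀ ℕ`. -/
def exponents (L : Ideal (MvPolynomial σ R)) : Set (σ →₀ ℕ) :=
  {a | monomial a (1 : R) ∈ L}

lemma mem_exponents : a ∈ exponents L ↔ monomial a (1 : R) ∈ L :=
  Iff.rfl

lemma exponents_mono (h : L ≤ M) : exponents L ⊆ exponents M :=
  fun _ ha => h ha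

lemma add_mem_exponents_mul (ha : a ∈ exponents L) (hb : b ∈ exponents M) :
    a + b ∈ exponents (L * M) := by
  simpa only [mem_exponents, monomial_mul, one_mul] using Ideal.mul_mem_mul ha hb

lemma isUpperSet_exponents (L : Ideal (MvPolynomial σ R)) : IsUpperSet (exponents L) := by
  intro a b hab ha
  obtain ⟨c, rfl⟩ := exists_add_of_le hab
  simpa only [mem_exponents, monomial_mul, one_mul] using L.mul_mem_right (monomial c 1) ha

lemma add_mem_exponents (b : σ →₀ ℕ) (ha : a ∈ exponents L) : a + b ∈ exponents L :=
  isUpperSet_exponents L le_self_add ha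

lemma monomial_mem_of_mem_exponents (c : R) (ha : a ∈ exponents L) : monomial a c ∈ L := by
  simpa only [C_mul_monomial, mul_one] using L.mul_mem_left (C c) ha

lemma zero_mem_exponents_iff : 0 ∈ exponents L ↔ L = ⊤ :=
  L.eq_top_iff_one.symm

lemma mem_exponents_span_monomial [Nontrivial R] {G : Set (σ →₀ ℕ)} :
    a ∈ exponents (Ideal.span ((fun g => monomial g (1 : R)) '' G)) ↔ ∃ g ∈ G, g ≤ a := by
  classical
  simp only [mem_exponents, mem_ideal_span_monomial_image, support_monomial, one_ne_zero,
    if_false, Finset.mem_singleton, forall_eq]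

lemma mem_exponents_colon_monomial :
    b ∈ exponents (L.colon {monomial a (1 : R)}) ↔ a + b ∈ exponents L := by
  simp only [mem_exponents, Submodule.mem_colon_singleton, smul_eq_mul, monomial_mul, one_mul,
    add_comm]

lemma colon_monomial_eq_top_iff : L.colon {monomial a (1 : R)} = ⊤ ↔ a ∈ exponents L := by
  rw [Submodule.colon_eq_top_iff_subset, Set.singleton_subset_iff]
  rfl

lemma exists_X_mem_of_mem_exponents (hL : L.IsPrime) (ha : a ∈ exponents L) :
    ∃ i, a i ≠ 0 ∧ X i ∈ L := by
  rw [mem_exponents, monomial_eq, C_1, one_mul, Finsupp.prod, hL.prod_mem_iff] at ha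
  obtain ⟨i, hi, hXi⟩ := ha
  exact ⟨i, Finsupp.mem_support_iff.1 hi, hL.mem_of_pow_mem _ hXi⟩

lemma eq_add_single_or_of_add_eq_add_single {c : σ →₀ ℕ} {x : σ}
    (h : b + c = a + Finsupp.single x 1) :
    (∃ d, b = d + Finsupp.single x 1 ∧ a = d + c) ∨
      ∃ d, c = d + Finsupp.single x 1 ∧ a = b + d := by
  have hx : b x + c x = a x + 1 := by simpa using DFunLike.congr_fun h x
  rcases Nat.eq_zero_or_pos (b x) with hb | hb
  · obtain ⟨d, rfl⟩ := exists_add_of_le (Finsupp.single_le_iff.2 (by omega : 1 ≤ c x))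
    refine .inr ⟨d, add_comm _ _, add_right_cancel (b := Finsupp.single x 1) ?_⟩
    rw [← h, add_assoc, add_comm d]
  · obtain ⟨d, rfl⟩ := exists_add_of_le (Finsupp.single_le_iff.2 (by omega : 1 ≤ b x))
    refine .inl ⟨d, add_comm _ _, add_right_cancel (b := Finsupp.single x 1) ?_⟩
    rw [← h]
    abel

open scoped Pointwise in
lemma span_monomial_mul_span_monomial (G H : Set (σ →₀ ℕ)) :
    Ideal.span ((fun a => monomial a (1 : R)) '' G) *
      Ideal.span ((fun a => monomial a (1 : R)) '' H) =
        Ideal.span ((fun a => monomial a (1 : R)) '' (G + H)) := by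
  rw [Ideal.span_mul_span', ← Set.image2_mul, Set.image2_image_left, Set.image2_image_right,
    ← Set.image2_add, Set.image_image2]
  simp only [monomial_mul, one_mul]

end Exponents

section MonomialIdeal

open scoped Pointwise

variable {σ K : Type} [Field K] {L M : Ideal (MvPolynomial σ K)}

lemma isMonomialIdeal_iff :
    IsMonomialIdeal L ↔ ∀ f ∈ L, ∀ a ∈ f.support, a ∈ exponents L := by
  constructor
  · rintro ⟨G, rfl⟩ f hf a ha
    exact mem_exponents_span_monomial.2 (mem_ideal_span_monomial_image.1 hf a ha)
  · intro h
    refine ⟨exponents L, le_antisymm (fun f hf => ?_) (Ideal.span_le.2 ?_)⟩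
    · exact mem_ideal_span_monomial_image.2 fun a ha => ⟨a, h f hf a ha, le_rfl⟩
    · rintro _ ⟨a, ha, rfl⟩
      exact ha

namespace IsMonomialIdeal

lemma mem_iff (hL : IsMonomialIdeal L) {f : MvPolynomial σ K} :
    f ∈ L ↔ ∀ a ∈ f.support, a ∈ exponents L := by
  refine ⟨isMonomialIdeal_iff.1 hL f, fun h => ?_⟩
  rw [f.as_sum]
  exact L.sum_mem fun a ha => monomial_mem_of_mem_exponents _ (h a ha)

lemma ext_exponents (hL : IsMonomialIdeal L) (hM : IsMonomialIdeal M)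
    (h : ∀ a, a ∈ exponents L ↔ a ∈ exponents M) : L = M := by
  ext f
  simp only [hL.mem_iff, hM.mem_iff, h]

lemma exponents_nonempty (hL : IsMonomialIdeal L) (hL0 : L ≠ ⊥) : (exponents L).Nonempty := by
  obtain ⟨f, hf, hf0⟩ := Submodule.exists_mem_ne_zero_of_ne_bot hL0
  obtain ⟨a, ha⟩ := support_nonempty.2 hf0
  exact ⟨a, hL.mem_iff.1 hf a ha⟩

lemma constantCoeff_eq_zero (hL : IsMonomialIdeal L) (hLtop : L ≠ ⊤) {f : MvPolynomial σ K}
    (hf : f ∈ L) : constantCoeff f = 0 := by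
  by_contra h
  exact hLtop (zero_mem_exponents_iff.1 (hL.mem_iff.1 hf 0 (mem_support_iff.2 h)))

lemma colon_monomial (hL : IsMonomialIdeal L) (a : σ →₀ ℕ) :
    IsMonomialIdeal (L.colon {monomial a 1}) := by
  refine isMonomialIdeal_iff.2 fun f hf b hb => mem_exponents_colon_monomial.2 ?_
  rw [Submodule.mem_colon_singleton, smul_eq_mul] at hf
  refine hL.mem_iff.1 hf _ ?_
  rwa [mem_support_iff, add_comm, coeff_mul_monomial, mul_one, ← mem_support_iff]

lemma mul (hL : IsMonomialIdeal L) (hM : IsMonomialIdeal M) : IsMonomialIdeal (L * M) := by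
  obtain ⟨G, rfl⟩ := hL
  obtain ⟨H, rfl⟩ := hM
  exact ⟨G + H, span_monomial_mul_span_monomial G H⟩

lemma pow (hL : IsMonomialIdeal L) (k : ℕ) : IsMonomialIdeal (L ^ k) := by
  induction k with
  | zero => exact isMonomialIdeal_iff.2 fun f _ a _ => by simp [mem_exponents]
  | succ k ih => exact pow_succ L k ▸ ih.mul hL

lemma exponents_mul (hL : IsMonomialIdeal L) (hM : IsMonomialIdeal M) :
    exponents (L * M) = exponents L + exponents M := by
  refine Set.Subset.antisymm (fun a ha => ?_) (Set.add_subset_iff.2 fun _ hb _ hc =>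
    add_mem_exponents_mul hb hc)
  obtain ⟨G, rfl⟩ := hL
  obtain ⟨H, rfl⟩ := hM
  rw [span_monomial_mul_span_monomial, mem_exponents_span_monomial] at ha
  obtain ⟨_, ⟨g, hg, h, hh, rfl⟩, hle⟩ := ha
  obtain ⟨c, rfl⟩ := exists_add_of_le hle
  exact ⟨g, mem_exponents_span_monomial.2 ⟨g, hg, le_rfl⟩, h + c,
    mem_exponents_span_monomial.2 ⟨h, hh, le_self_add⟩, (add_assoc g h c).symm⟩

lemma mem_exponents_pow_of_add_single_mem (hL : IsMonomialIdeal L) (x : σ) (k : ℕ) {a : σ →₀ ℕ}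
    (ha : a + Finsupp.single x 1 ∈ exponents (L ^ (k + 1))) : a ∈ exponents (L ^ k) := by
  induction k generalizing a with
  | zero => simp [mem_exponents]
  | succ k ih =>
    rw [pow_succ, (hL.pow _).exponents_mul hL] at ha
    obtain ⟨b, hb, c, hc, hbc⟩ := ha
    obtain ⟨d, rfl, rfl⟩ | ⟨d, -, rfl⟩ := eq_add_single_or_of_add_eq_add_single hbc
    · exact pow_succ L k ▸ add_mem_exponents_mul (ih hb) hc
    · exact add_mem_exponents d hb

lemma mem_exponents_pow_of_isPrime_colon (hL : IsMonomialIdeal L) (hL0 : L ≠ ⊥) {k : ℕ}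
    {a : σ →₀ ℕ} (hP : ((L ^ (k + 1)).colon {monomial a 1}).IsPrime) : a ∈ exponents (L ^ k) := by
  obtain ⟨g, hg⟩ := (hL.pow (k + 1)).exponents_nonempty (pow_ne_zero _ hL0)
  obtain ⟨x, -, hx⟩ := exists_X_mem_of_mem_exponents hP (exponents_mono Ideal.le_colon hg)
  exact hL.mem_exponents_pow_of_add_single_mem x k (mem_exponents_colon_monomial.1 hx)

lemma eq_span_X_of_isPrime (hL : IsMonomialIdeal L) (hP : L.IsPrime) :
    L = Ideal.span (X '' {i | X i ∈ L}) := by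
  refine le_antisymm (fun f hf => mem_ideal_span_X_image.2 fun a ha => ?_) (Ideal.span_le.2 ?_)
  · obtain ⟨i, hai, hXi⟩ := exists_X_mem_of_mem_exponents hP (hL.mem_iff.1 hf a ha)
    exact ⟨i, hXi, hai⟩
  · rintro _ ⟨i, hi, rfl⟩
    exact hi

end IsMonomialIdeal

end MonomialIdeal

section AssociatedPrimes

universe u

lemma support_sub_leadingTerm {σ R : Type*} [CommRing R] [DecidableEq (σ →₀ ℕ)]
    (m : MonomialOrder σ) (f : MvPolynomial σ R) :
    (f - m.leadingTerm f).support = f.support.erase (m.degree f) := by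
  classical
  ext a
  by_cases h : m.degree f = a
  · subst h
    simp [MonomialOrder.leadingTerm, MonomialOrder.leadingCoeff, coeff_monomial]
  · simp [MonomialOrder.leadingTerm, coeff_monomial, h, Ne.symm h]

lemma card_support_sub_leadingTerm_lt {σ R : Type*} [CommRing R] (m : MonomialOrder σ)
    {f : MvPolynomial σ R} (hf : f ≠ 0) :
    (f - m.leadingTerm f).support.card < f.support.card := by
  classical
  rw [support_sub_leadingTerm]
  exact Finset.card_erase_lt_of_mem (m.degree_mem_support hf)

open scoped Pointwise in
lemma card_support_monomial_mul_le {σ R : Type*} [CommSemiring R] (a : σ →₀ ℕ) (c : R)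
    (f : MvPolynomial σ R) : (monomial a c * f).support.card ≤ f.support.card := by
  classical
  calc (monomial a c * f).support.card
      ≤ ({a} + f.support : Finset (σ →₀ ℕ)).card := Finset.card_le_card <|
        (support_mul _ _).trans (Finset.add_subset_add_right support_monomial_subset)
    _ ≤ f.support.card := by simp

lemma nonempty_monomialOrder (σ : Type u) : Nonempty (MonomialOrder.{u, u} σ) := by
  obtain ⟨_, _⟩ := exists_wellFoundedLT (α := σ)
  exact ⟨MonomialOrder.lex (σ := σᵒᵈ)⟩

lemma mem_assOf_iff_exists_colon {A : Type} [CommRing A] [IsNoetherianRing A] {L P : Ideal A} :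
    P ∈ assOf L ↔ P.IsPrime ∧ ∃ f, P = L.colon {f} := by
  have colon_mk (f : A) :
      (⊥ : Submodule A (A ⧸ L)).colon {Ideal.Quotient.mk L f} = L.colon {f} := by
    ext g
    rw [Submodule.mem_colon_singleton, Submodule.mem_colon_singleton, Submodule.mem_bot,
      ← Ideal.Quotient.eq_zero_iff_mem, smul_eq_mul, map_mul]
    rfl
  rw [assOf, AssociatedPrimes.mem_iff, isAssociatedPrime_iff, Ideal.Quotient.mk_surjective.exists]
  simp only [colon_mk]

variable {σ K : Type} [Field K] {L P : Ideal (MvPolynomial σ K)}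

lemma isMonomialIdeal_of_degree_mem (m : MonomialOrder σ)
    (h : ∀ f ∈ L, f ≠ 0 → m.degree f ∈ exponents L) : IsMonomialIdeal L := by
  classical
  refine isMonomialIdeal_iff.2 fun f => ?_
  induction hn : f.support.card using Nat.strong_induction_on generalizing f with
  | _ n ih =>
    subst hn
    intro hf a ha
    have hf0 : f ≠ 0 := support_nonempty.1 ⟨a, ha⟩
    have hlead := h f hf hf0
    by_cases haf : a = m.degree f
    · rwa [haf]
    · refine ih _ (card_support_sub_leadingTerm_lt m hf0) _ rfl
        (L.sub_mem hf (monomial_mem_of_mem_exponents _ hlead)) a ?_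
      rw [support_sub_leadingTerm]
      exact Finset.mem_erase.2 ⟨haf, ha⟩

lemma IsMonomialIdeal.colon_monomial_mul_sub_leadingTerm (hL : IsMonomialIdeal L)
    (m : MonomialOrder σ) (hP : P.IsPrime) {f g : MvPolynomial σ K} (hf : f ≠ 0) (hg : g ≠ 0)
    (hPf : L.colon {f} = P) (hgP : g ∈ P) (hdeg : m.degree g ∉ exponents P) :
    L.colon {monomial (m.degree g) 1 * (f - m.leadingTerm f)} = P := by
  have hgf : g * f ∈ L := by simpa [← hPf, Submodule.mem_colon_singleton] using hgP
  have hlead : m.degree g + m.degree f ∈ exponents L := by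
    rw [← m.degree_mul hg hf]
    exact hL.mem_iff.1 hgf _ (m.degree_mem_support (mul_ne_zero hg hf))
  ext h
  have hhead : h * (monomial (m.degree g) 1 * m.leadingTerm f) ∈ L := by
    rw [MonomialOrder.leadingTerm, monomial_mul]
    exact L.mul_mem_left _ (monomial_mem_of_mem_exponents _ hlead)
  calc h ∈ L.colon {monomial (m.degree g) 1 * (f - m.leadingTerm f)}
      ↔ h * monomial (m.degree g) 1 * f ∈ L := by
        rw [Submodule.mem_colon_singleton, smul_eq_mul, mul_sub, mul_sub,
          L.sub_mem_iff_left hhead, mul_assoc]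
    _ ↔ h * monomial (m.degree g) 1 ∈ P := by
        rw [← hPf, Submodule.mem_colon_singleton, smul_eq_mul]
    _ ↔ h ∈ P := ⟨fun hh => (hP.mem_or_mem hh).resolve_right hdeg, P.mul_mem_right _⟩

-- Among the `f` with `L : f = P`, one with the fewest terms cannot be shortened as in the previous
-- lemma, so `P` contains the leading monomials of its elements.
lemma IsMonomialIdeal.colon_of_isPrime (hL : IsMonomialIdeal L) {f : MvPolynomial σ K}
    (hP : (L.colon {f}).IsPrime) : IsMonomialIdeal (L.colon {f}) := by
  generalize hPf : L.colon {f} = P at hP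
  obtain ⟨m⟩ := nonempty_monomialOrder σ
  obtain ⟨f', hPf', hmin⟩ := exists_minimalFor_of_wellFoundedLT (fun f' => L.colon {f'} = P)
    (fun f' => f'.support.card) ⟨f, hPf⟩
  have hf' : f' ≠ 0 := by
    rintro rfl
    exact hP.ne_top (by rw [← hPf', Submodule.colon_singleton_zero])
  refine isMonomialIdeal_of_degree_mem m fun g hg hg0 => ?_
  by_contra hdeg
  have hlt := (card_support_monomial_mul_le (m.degree g) 1 (f' - m.leadingTerm f')).trans_lt
    (card_support_sub_leadingTerm_lt m hf')
  exact hlt.not_ge <| hmin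
    (hL.colon_monomial_mul_sub_leadingTerm m hP hf' hg0 hPf' hg hdeg) hlt.le

lemma IsMonomialIdeal.exists_colon_monomial_eq (hL : IsMonomialIdeal L) {f : MvPolynomial σ K}
    (hP : (L.colon {f}).IsPrime) :
    ∃ a, L.colon {f} = L.colon {monomial a 1} := by
  have hmon := hL.colon_of_isPrime hP
  have hinf : f.support.inf (fun a => L.colon {monomial a 1}) ≤ L.colon {f} := by
    intro g hg
    simp only [Submodule.mem_finsetInf, Submodule.mem_colon_singleton, smul_eq_mul] at hg ⊢
    rw [f.as_sum, Finset.mul_sum]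
    refine L.sum_mem fun a ha => ?_
    have := L.mul_mem_left (C (coeff a f)) (hg a ha)
    rwa [mul_left_comm, C_mul_monomial, mul_one] at this
  obtain ⟨a, ha, hle⟩ := hP.inf_le'.1 hinf
  refine ⟨a, le_antisymm (fun g hg => ?_) hle⟩
  refine (hL.colon_monomial a).mem_iff.2 fun b hb => mem_exponents_colon_monomial.2 ?_
  have hbf : monomial b 1 * f ∈ L :=
    Submodule.mem_colon_singleton.1 (hmon.mem_iff.1 hg b hb)
  refine hL.mem_iff.1 hbf _ ?_
  rwa [mem_support_iff, add_comm, coeff_monomial_mul, one_mul, ← mem_support_iff]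

lemma IsMonomialIdeal.mem_assOf_iff [Finite σ] (hL : IsMonomialIdeal L) :
    P ∈ assOf L ↔ P.IsPrime ∧ ∃ a, P = L.colon {monomial a 1} := by
  rw [mem_assOf_iff_exists_colon]
  refine and_congr_right fun hP => ⟨?_, fun ⟨a, ha⟩ => ⟨_, ha⟩⟩
  rintro ⟨f, rfl⟩
  exact hL.exists_colon_monomial_eq hP

end AssociatedPrimes

section ExtSum

/-- The ideal `I + J` of `K[x, y]` obtained by extending `I ⊆ K[x]` and `J ⊆ K[y]`. -/
abbrev extSum {σ τ R : Type*} [CommSemiring R] (I : Ideal (MvPolynomial σ R))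
    (J : Ideal (MvPolynomial τ R)) : Ideal (MvPolynomial (σ ⊕ τ) R) :=
  Ideal.map (rename Sum.inl) I + Ideal.map (rename Sum.inr) J

lemma extSum_span_X {σ τ R : Type*} [CommSemiring R] (F : Set σ) (G : Set τ) :
    extSum (Ideal.span (X '' F : Set (MvPolynomial σ R))) (Ideal.span (X '' G)) =
      Ideal.span (X '' (Sum.inl '' F ∪ Sum.inr '' G)) := by
  simp only [extSum, Ideal.map_span, Ideal.add_eq_sup, ← Ideal.span_union, Set.image_union,
    Set.image_image, rename_X]

lemma extSum_span_monomial {σ τ R : Type*} [CommSemiring R] (G : Set (σ →₀ ℕ))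
    (H : Set (τ →₀ ℕ)) :
    extSum (Ideal.span ((fun a => monomial a (1 : R)) '' G))
        (Ideal.span ((fun b => monomial b (1 : R)) '' H)) =
      Ideal.span ((fun c => monomial c (1 : R)) ''
        ((Finsupp.sumElim · 0) '' G ∪ (Finsupp.sumElim 0 ·) '' H)) := by
  simp only [extSum, Ideal.map_span, Ideal.add_eq_sup, ← Ideal.span_union, Set.image_union,
    Set.image_image, rename_monomial, Finsupp.sumElim_eq_add, Finsupp.mapDomain_zero, add_zero,
    zero_add]

lemma isPrime_span_X {σ R : Type*} [CommRing R] [IsDomain R] (F : Set σ) :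
    (Ideal.span (X '' F : Set (MvPolynomial σ R))).IsPrime := by
  classical
  let killF : MvPolynomial σ R →ₐ[R] MvPolynomial σ R := aeval fun i => if i ∈ F then 0 else X i
  suffices h : Ideal.span (X '' F) = RingHom.ker killF by
    rw [h]
    exact RingHom.ker_isPrime killF
  refine le_antisymm (Ideal.span_le.2 ?_) fun f hf => ?_
  · rintro _ ⟨i, hi, rfl⟩
    simp [killF, hi]
  · have mk_comp_killF : (Ideal.Quotient.mkₐ R (Ideal.span (X '' F))).comp killF =
        Ideal.Quotient.mkₐ R _ := by
      ext i
      by_cases hi : i ∈ F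
      · simpa [killF, hi] using
          (Ideal.Quotient.eq_zero_iff_mem.2 (Ideal.subset_span (Set.mem_image_of_mem X hi))).symm
      · simp [killF, hi]
    have hmk := DFunLike.congr_fun mk_comp_killF f
    rw [AlgHom.comp_apply, RingHom.mem_ker.1 hf, map_zero] at hmk
    exact Ideal.Quotient.eq_zero_iff_mem.1 hmk.symm

variable {σ τ K : Type} [Field K] {I : Ideal (MvPolynomial σ K)} {J : Ideal (MvPolynomial τ K)}

lemma isMonomialIdeal_extSum (hI : IsMonomialIdeal I) (hJ : IsMonomialIdeal J) :
    IsMonomialIdeal (extSum I J) := by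
  obtain ⟨G, rfl⟩ := hI
  obtain ⟨H, rfl⟩ := hJ
  exact ⟨_, extSum_span_monomial G H⟩

lemma sumElim_mem_exponents_extSum (hI : IsMonomialIdeal I) (hJ : IsMonomialIdeal J)
    {a : σ →₀ ℕ} {b : τ →₀ ℕ} :
    a.sumElim b ∈ exponents (extSum I J) ↔ a ∈ exponents I ∨ b ∈ exponents J := by
  obtain ⟨G, rfl⟩ := hI
  obtain ⟨H, rfl⟩ := hJ
  rw [extSum_span_monomial, mem_exponents_span_monomial, mem_exponents_span_monomial,
    mem_exponents_span_monomial]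
  simp [or_and_right, exists_or, Finsupp.le_def]

lemma isPrime_extSum (hI : IsMonomialIdeal I) (hJ : IsMonomialIdeal J) (hIp : I.IsPrime)
    (hJp : J.IsPrime) : (extSum I J).IsPrime := by
  rw [hI.eq_span_X_of_isPrime hIp, hJ.eq_span_X_of_isPrime hJp, extSum_span_X]
  exact isPrime_span_X _

lemma comap_rename_map_rename_add {ρ : Type*} {e : σ → ρ} {e' : τ → ρ}
    (he : Function.Injective e) (hee' : ∀ j, e' j ∉ Set.range e) (I : Ideal (MvPolynomial σ K))
    (hJ : IsMonomialIdeal J) (hJtop : J ≠ ⊤) :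
    (Ideal.map (rename e) I + Ideal.map (rename e') J).comap (rename e) = I := by
  have killCompl_rename (g : MvPolynomial τ K) :
      killCompl he (rename e' g) = C (constantCoeff g) := by
    have hcomp : (killCompl he).comp (rename e') =
        (Algebra.ofId K (MvPolynomial σ K)).comp (aeval fun _ => 0) := by
      ext j
      simp [killCompl, hee' j]
    exact (DFunLike.congr_fun hcomp g).trans (by simp [Algebra.ofId_apply, constantCoeff_eq])
  refine le_antisymm ?_ (Ideal.map_le_iff_le_comap.1 le_sup_left)
  have hle : Ideal.map (rename e) I + Ideal.map (rename e') J ≤ I.comap (killCompl he) := by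
    refine sup_le (Ideal.map_le_iff_le_comap.2 fun f hf => ?_)
      (Ideal.map_le_iff_le_comap.2 fun g hg => ?_)
    · rwa [Ideal.mem_comap, Ideal.mem_comap, killCompl_rename_app]
    · rw [Ideal.mem_comap, Ideal.mem_comap, killCompl_rename, hJ.constantCoeff_eq_zero hJtop hg,
        map_zero]
      exact I.zero_mem
  intro f hf
  simpa only [Ideal.mem_comap, killCompl_rename_app] using hle hf

lemma comap_inl_extSum (I : Ideal (MvPolynomial σ K)) (hJ : IsMonomialIdeal J) (hJtop : J ≠ ⊤) :
    (extSum I J).comap (rename Sum.inl) = I :=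
  comap_rename_map_rename_add Sum.inl_injective (by simp) I hJ hJtop

lemma comap_inr_extSum (hI : IsMonomialIdeal I) (hItop : I ≠ ⊤) (J : Ideal (MvPolynomial τ K)) :
    (extSum I J).comap (rename Sum.inr) = J := by
  rw [extSum, add_comm]
  exact comap_rename_map_rename_add Sum.inr_injective (by simp) J hI hItop

lemma isPrime_of_isPrime_extSum (hI : IsMonomialIdeal I) (hJ : IsMonomialIdeal J) (hItop : I ≠ ⊤)
    (hJtop : J ≠ ⊤) (hIJ : (extSum I J).IsPrime) : I.IsPrime ∧ J.IsPrime := by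
  have hIJl := hIJ.comap (rename Sum.inl)
  have hIJr := hIJ.comap (rename Sum.inr)
  rw [comap_inl_extSum I hJ hJtop] at hIJl
  rw [comap_inr_extSum hI hItop J] at hIJr
  exact ⟨hIJl, hIJr⟩

end ExtSum

section ExtSumPow

variable {σ τ K : Type} [Field K] {I : Ideal (MvPolynomial σ K)} {J : Ideal (MvPolynomial τ K)}
  {a : σ →₀ ℕ} {b : τ →₀ ℕ}

lemma exists_eq_sumElim (c : σ ⊕ τ →₀ ℕ) : ∃ a b, c = Finsupp.sumElim a b :=
  ⟨_, _, (Finsupp.comapDomain_sumElim_comapDomain c).symm⟩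

lemma sumElim_mem_exponents_extSum_pow_of_mem {i j : ℕ} (ha : a ∈ exponents (I ^ i))
    (hb : b ∈ exponents (J ^ j)) : a.sumElim b ∈ exponents (extSum I J ^ (i + j)) := by
  have ha' : Finsupp.mapDomain Sum.inl a ∈ exponents (extSum I J ^ i) := by
    have := Ideal.mem_map_of_mem (rename (R := K) (Sum.inl (β := τ))) ha
    rw [Ideal.map_pow, rename_monomial] at this
    exact Ideal.pow_right_mono le_sup_left i this
  have hb' : Finsupp.mapDomain Sum.inr b ∈ exponents (extSum I J ^ j) := by
    have := Ideal.mem_map_of_mem (rename (R := K) (Sum.inr (α := σ))) hb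
    rw [Ideal.map_pow, rename_monomial] at this
    exact Ideal.pow_right_mono le_sup_right j this
  rw [Finsupp.sumElim_eq_add, pow_add]
  exact add_mem_exponents_mul ha' hb'

lemma sumElim_mem_exponents_extSum_pow (hI : IsMonomialIdeal I) (hJ : IsMonomialIdeal J) {k : ℕ} :
    a.sumElim b ∈ exponents (extSum I J ^ k) ↔
      ∃ i j, i + j = k ∧ a ∈ exponents (I ^ i) ∧ b ∈ exponents (J ^ j) := by
  refine ⟨?_, ?_⟩
  · induction k generalizing a b with
    | zero => exact fun _ => ⟨0, 0, rfl, by simp [mem_exponents], by simp [mem_exponents]⟩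
    | succ k ih =>
      have hIJ := isMonomialIdeal_extSum hI hJ
      rw [pow_succ, (hIJ.pow k).exponents_mul hIJ]
      rintro ⟨c, hc, d, hd, hcd⟩
      obtain ⟨a₁, b₁, rfl⟩ := exists_eq_sumElim c
      obtain ⟨a₂, b₂, rfl⟩ := exists_eq_sumElim d
      replace hcd : a₁.sumElim b₁ + a₂.sumElim b₂ = a.sumElim b := hcd
      rw [← Finsupp.sumElim_add] at hcd
      obtain ⟨rfl, rfl⟩ := Prod.mk.inj <|
        Finsupp.sumFinsuppEquivProdFinsupp.symm.injective (a₁ := (_, _)) (a₂ := (_, _)) hcd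
      obtain ⟨i, j, rfl, ha₁, hb₁⟩ := ih hc
      rcases (sumElim_mem_exponents_extSum hI hJ).1 hd with ha₂ | hb₂
      · exact ⟨i + 1, j, by omega, pow_succ I i ▸ add_mem_exponents_mul ha₁ ha₂,
          add_mem_exponents b₂ hb₁⟩
      · exact ⟨i, j + 1, by omega, add_mem_exponents a₂ ha₁,
          pow_succ J j ▸ add_mem_exponents_mul hb₁ hb₂⟩
  · rintro ⟨i, j, rfl, ha, hb⟩
    exact sumElim_mem_exponents_extSum_pow_of_mem ha hb

lemma colon_extSum_pow_monomial (hI : IsMonomialIdeal I) (hJ : IsMonomialIdeal J) {i j : ℕ}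
    (ha : a ∈ exponents (I ^ i)) (hb : b ∈ exponents (J ^ j)) :
    (extSum I J ^ (i + j + 1)).colon {monomial (a.sumElim b) 1} =
      extSum ((I ^ (i + 1)).colon {monomial a 1}) ((J ^ (j + 1)).colon {monomial b 1}) := by
  have hIa := (hI.pow (i + 1)).colon_monomial a
  have hJb := (hJ.pow (j + 1)).colon_monomial b
  refine (((isMonomialIdeal_extSum hI hJ).pow _).colon_monomial _).ext_exponents
    (isMonomialIdeal_extSum hIa hJb) fun w => ?_
  obtain ⟨c, d, rfl⟩ := exists_eq_sumElim w
  rw [mem_exponents_colon_monomial, ← Finsupp.sumElim_add, sumElim_mem_exponents_extSum hIa hJb,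
    sumElim_mem_exponents_extSum_pow hI hJ, mem_exponents_colon_monomial,
    mem_exponents_colon_monomial]
  constructor
  · rintro ⟨i', j', hij, hac, hbd⟩
    rcases Nat.lt_or_ge i i' with h | h
    · exact .inl (exponents_mono (Ideal.pow_le_pow_right h) hac)
    · exact .inr (exponents_mono (Ideal.pow_le_pow_right (by omega)) hbd)
  · rintro (hac | hbd)
    · exact ⟨i + 1, j, by omega, hac, add_mem_exponents d hb⟩
    · exact ⟨i, j + 1, by omega, add_mem_exponents c ha, hbd⟩

lemma exists_mem_pow_notMem_pow_succ {A : Type*} [CommSemiring A] {L : Ideal A} {f : A} {k : ℕ}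
    (hf : f ∉ L ^ k) : ∃ i, f ∈ L ^ i ∧ f ∉ L ^ (i + 1) := by
  by_contra! h
  exact hf (Nat.rec (by simp) h k)

lemma le_of_mem_pow_of_notMem_pow_succ {A : Type*} [CommSemiring A] {L : Ideal A} {f : A}
    {i j : ℕ} (hj : f ∈ L ^ j) (hi : f ∉ L ^ (i + 1)) : j ≤ i := by
  by_contra! h
  exact hi (Ideal.pow_le_pow_right h hj)

lemma add_add_one_eq_of_isPrime_colon (hI : IsMonomialIdeal I) (hJ : IsMonomialIdeal J)
    (hI0 : I ≠ ⊥) {i j k : ℕ} (hai : a ∈ exponents (I ^ i)) (hai' : a ∉ exponents (I ^ (i + 1)))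
    (hbj : b ∈ exponents (J ^ j)) (hbj' : b ∉ exponents (J ^ (j + 1)))
    (hP : ((extSum I J ^ k).colon {monomial (a.sumElim b) 1}).IsPrime) : i + j + 1 = k := by
  have hlt : i + j < k := by
    by_contra! h
    refine hP.ne_top (colon_monomial_eq_top_iff.2 ?_)
    exact Ideal.pow_le_pow_right h (sumElim_mem_exponents_extSum_pow_of_mem hai hbj)
  obtain ⟨g, hg⟩ := (hI.pow k).exponents_nonempty (pow_ne_zero k hI0)
  have hgP : g.sumElim 0 ∈ exponents ((extSum I J ^ k).colon {monomial (a.sumElim b) 1}) :=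
    exponents_mono Ideal.le_colon (sumElim_mem_exponents_extSum_pow_of_mem (j := 0) hg
      (by simp [mem_exponents]))
  obtain ⟨x | y, hz, hX⟩ := exists_X_mem_of_mem_exponents hP hgP
  · have hax : (a + Finsupp.single x 1).sumElim b ∈ exponents (extSum I J ^ k) := by
      have hX' := mem_exponents_colon_monomial.1 hX
      rwa [← Finsupp.sumElim_single_zero, ← Finsupp.sumElim_add, add_zero] at hX'
    obtain ⟨i', j', rfl, hi', hj'⟩ := (sumElim_mem_exponents_extSum_pow hI hJ).1 hax
    have hj'_le : j' ≤ j := le_of_mem_pow_of_notMem_pow_succ hj' hbj'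
    obtain _ | i' := i'
    · omega
    · have hi'_le : i' ≤ i := le_of_mem_pow_of_notMem_pow_succ
        (hI.mem_exponents_pow_of_add_single_mem x i' hi') hai'
      omega
  · simp at hz

lemma mem_assOf_extSum_pow_iff [Finite σ] [Finite τ] (hI : IsMonomialIdeal I)
    (hJ : IsMonomialIdeal J) (hI0 : I ≠ ⊥) (hJ0 : J ≠ ⊥) {k : ℕ}
    {P : Ideal (MvPolynomial (σ ⊕ τ) K)} :
    P ∈ assOf (extSum I J ^ k) ↔ ∃ i j, i + j + 1 = k ∧
      ∃ p ∈ assOf (I ^ (i + 1)), ∃ q ∈ assOf (J ^ (j + 1)), P = extSum p q := by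
  rw [((isMonomialIdeal_extSum hI hJ).pow k).mem_assOf_iff]
  simp only [(hI.pow _).mem_assOf_iff, (hJ.pow _).mem_assOf_iff]
  constructor
  · rintro ⟨hP, c, rfl⟩
    obtain ⟨a, b, rfl⟩ := exists_eq_sumElim c
    have habk : a.sumElim b ∉ exponents (extSum I J ^ k) := fun h =>
      hP.ne_top (colon_monomial_eq_top_iff.2 h)
    obtain ⟨i, hai, hai'⟩ := exists_mem_pow_notMem_pow_succ fun ha => habk <|
      sumElim_mem_exponents_extSum_pow_of_mem (j := 0) ha (by simp [mem_exponents])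
    obtain ⟨j, hbj, hbj'⟩ := exists_mem_pow_notMem_pow_succ fun hb => habk <|
      zero_add k ▸ sumElim_mem_exponents_extSum_pow_of_mem (i := 0) (by simp [mem_exponents]) hb
    obtain rfl := add_add_one_eq_of_isPrime_colon hI hJ hI0 hai hai' hbj hbj' hP
    rw [colon_extSum_pow_monomial hI hJ hai hbj] at hP ⊢
    obtain ⟨hp, hq⟩ := isPrime_of_isPrime_extSum ((hI.pow (i + 1)).colon_monomial a)
      ((hJ.pow (j + 1)).colon_monomial b) (mt colon_monomial_eq_top_iff.1 hai')
      (mt colon_monomial_eq_top_iff.1 hbj') hP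
    exact ⟨i, j, rfl, _, ⟨hp, a, rfl⟩, _, ⟨hq, b, rfl⟩, rfl⟩
  · rintro ⟨i, j, rfl, _, ⟨hp, a, rfl⟩, _, ⟨hq, b, rfl⟩, rfl⟩
    refine ⟨isPrime_extSum ((hI.pow _).colon_monomial a) ((hJ.pow _).colon_monomial b) hp hq,
      a.sumElim b, ?_⟩
    exact (colon_extSum_pow_monomial hI hJ (hI.mem_exponents_pow_of_isPrime_colon hI0 hp)
      (hJ.mem_exponents_pow_of_isPrime_colon hJ0 hq)).symm

end ExtSumPow

namespace IsStableAssValue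

variable {A : Type} [CommRing A] {L : Ideal A} {𝔄 𝔅 : Set (Ideal A)}

lemma unique (h𝔄 : IsStableAssValue L 𝔄) (h𝔅 : IsStableAssValue L 𝔅) : 𝔄 = 𝔅 := by
  obtain ⟨N, hN⟩ := h𝔄
  obtain ⟨N', hN'⟩ := h𝔅
  rw [← hN _ (le_max_left N N'), hN' _ (le_max_right N N')]

lemma exists_bound (h𝔄 : IsStableAssValue L 𝔄) :
    ∃ N, (∀ k, N ≤ k → assOf (L ^ (k + 1)) = 𝔄) ∧
      ∀ p ∈ assStar L, ∃ k ≤ N, p ∈ assOf (L ^ (k + 1)) := by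
  obtain ⟨N, hN⟩ := h𝔄
  have hN_succ (k : ℕ) (hk : N ≤ k) : assOf (L ^ (k + 1)) = 𝔄 := hN _ (by omega)
  refine ⟨N, hN_succ, ?_⟩
  rintro p ⟨_ | k, hk, hp⟩
  · omega
  rcases le_total k N with hkN | hNk
  · exact ⟨k, hkN, hp⟩
  · rw [hN_succ k hNk, ← hN_succ N le_rfl] at hp
    exact ⟨N, le_rfl, hp⟩

end IsStableAssValue

theorem stmt3_general {K σ τ : Type} [Field K] [Finite σ] [Finite τ]
    {I : Ideal (MvPolynomial σ K)} {J : Ideal (MvPolynomial τ K)}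
    (hI0 : I ≠ ⊥) (hI : IsMonomialIdeal I) (hJ0 : J ≠ ⊥) (hJ : IsMonomialIdeal J)
    {AI : Set (Ideal (MvPolynomial σ K))} {AJ : Set (Ideal (MvPolynomial τ K))}
    (hAI : IsStableAssValue I AI) (hAJ : IsStableAssValue J AJ) :
    IsStableAssValue (extSum I J)
      ({P | ∃ p ∈ assStar I, ∃ q ∈ AJ, P = extSum p q} ∪
        {P | ∃ p ∈ AI, ∃ q ∈ assStar J, P = extSum p q}) := by
  obtain ⟨NI, hAI_eq, hI_star⟩ := hAI.exists_bound
  obtain ⟨NJ, hAJ_eq, hJ_star⟩ := hAJ.exists_bound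
  refine ⟨NI + NJ + 1, fun k hk => Set.ext fun P => ?_⟩
  rw [mem_assOf_extSum_pow_iff hI hJ hI0 hJ0]
  constructor
  · rintro ⟨i, j, rfl, p, hp, q, hq, rfl⟩
    rcases (by omega : NJ ≤ j ∨ NI ≤ i) with hj | hi
    · exact .inl ⟨p, ⟨i + 1, by omega, hp⟩, q, hAJ_eq j hj ▸ hq, rfl⟩
    · exact .inr ⟨p, hAI_eq i hi ▸ hp, q, ⟨j + 1, by omega, hq⟩, rfl⟩
  · rintro (⟨p, hp, q, hq, rfl⟩ | ⟨p, hp, q, hq, rfl⟩)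
    · obtain ⟨i, hi, hpi⟩ := hI_star p hp
      exact ⟨i, k - 1 - i, by omega, p, hpi, q, (hAJ_eq (k - 1 - i) (by omega)).symm ▸ hq, rfl⟩
    · obtain ⟨j, hj, hqj⟩ := hJ_star q hq
      exact ⟨k - 1 - j, j, by omega, p, (hAI_eq (k - 1 - j) (by omega)).symm ▸ hp, q, hqj, rfl⟩

/-- Theorem 3.1 for monomial ideals: for nonzero proper monomial ideals
`I ⊂ R`, `J ⊂ T`, identified with their extensions to `S = R ⊗_K T`,
`Ass^∞(I+J) = { p + q : p ∈ Ass^*(I), q ∈ Ass^∞(J) } ∪ { p + q : p ∈ Ass^∞(I), q ∈ Ass^*(J) }`,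
where `p + q` denotes the sum of the extensions to `S`. -/
theorem stmt3 {K : Type} [Field K] {n m : ℕ}
    (I : Ideal (MvPolynomial (Fin n) K)) (J : Ideal (MvPolynomial (Fin m) K))
    (hInz : I ≠ ⊥) (hIpr : I ≠ ⊤) (hImon : IsMonomialIdeal I)
    (hJnz : J ≠ ⊥) (hJpr : J ≠ ⊤) (hJmon : IsMonomialIdeal J)
    (eI eJ : Ideal (MvPolynomial (Fin n ⊕ Fin m) K))
    (heI : eI = Ideal.map (rename Sum.inl) I)
    (heJ : eJ = Ideal.map (rename Sum.inr) J)
    (AI : Set (Ideal (MvPolynomial (Fin n) K)))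
    (AJ : Set (Ideal (MvPolynomial (Fin m) K)))
    (AL : Set (Ideal (MvPolynomial (Fin n ⊕ Fin m) K)))
    (hAI : IsStableAssValue I AI) (hAJ : IsStableAssValue J AJ)
    (hAL : IsStableAssValue (eI + eJ) AL) :
    AL = {P | ∃ p ∈ assStar I, ∃ q ∈ AJ,
            P = Ideal.map (rename Sum.inl) p + Ideal.map (rename Sum.inr) q} ∪
         {P | ∃ p ∈ AI, ∃ q ∈ assStar J,
            P = Ideal.map (rename Sum.inl) p + Ideal.map (rename Sum.inr) q} := by
  subst heI heJ
  exact hAL.unique (stmt3_general hInz hImon hJnz hJmon hAI hAJ)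
end
end
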